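/- arXiv:1802.03380 — 4 statements merged into one kernel-verified Lean document; each statement's English description precedes it below -/
import Mathlib

section
/- Let a > 0. The function K_a is smooth on ℝ³ ∖ {0}; for every x ≠ 0 its gradient is ∇K_a(x) = −x/|x|³ + (x/|x|³)(|x|/a + 1) e^{−|x|/a} and the gradient of its Laplacian is ∇(ΔK_a)(x) = (x/(a²|x|³))(|x|/a + 1) e^{−|x|/a}; consequently ∇K_a(x) − a² ∇(ΔK_a)(x) = −x/|x|³ for all x ≠ 0. -/
open MeasureTheory Real

noncomputable section

/-- Three dimensional Euclidean space. -/
abbrev E3 := EuclideanSpace ℝ (Fin 3)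

/-- The Laplacian of a function on `ℝ³`, as the sum of the second partial derivatives. -/
def lap (f : E3 → ℝ) (x : E3) : ℝ :=
  ∑ i : Fin 3, fderiv ℝ (fun y => fderiv ℝ f y (EuclideanSpace.single i 1)) x
    (EuclideanSpace.single i 1)

/-- The Bopp–Podolsky kernel `K_a(x) = (1 - e^{-|x|/a})/|x|`. -/
def K (a : ℝ) (x : E3) : ℝ := (1 - Real.exp (-‖x‖ / a)) / ‖x‖

lemma radial_aux (φ : ℝ → ℝ) (d : ℝ) (x : E3) (hx : x ≠ 0) (h : HasDerivAt φ (d * ‖x‖) ‖x‖) :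
    HasFDerivAt (fun y : E3 => φ ‖y‖) (d • innerSL ℝ x) x := by
  have hn : ‖x‖ ≠ 0 := norm_ne_zero_iff.mpr hx
  have h1 : HasFDerivAt (fun y : E3 => ‖y‖) ((‖x‖)⁻¹ • innerSL ℝ x) x := by
    have h2 := ((hasStrictFDerivAt_norm_sq x).hasFDerivAt).sqrt (by positivity)
    have h3 : (fun y : E3 => √(‖y‖ ^ 2)) = fun y => ‖y‖ := by
      funext y; exact Real.sqrt_sq (norm_nonneg y)
    rw [h3] at h2
    refine h2.congr_fderiv ?_
    ext v
    simp [Real.sqrt_sq (norm_nonneg x)]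
    field_simp
  refine (h.comp_hasFDerivAt x h1).congr_fderiv ?_
  ext v
  simp
  field_simp

lemma grad_aux (f : E3 → ℝ) (d : ℝ) (x : E3) (h : HasFDerivAt f (d • innerSL ℝ x) x) :
    gradient f x = d • x := by
  apply HasGradientAt.gradient
  rw [hasGradientAt_iff_hasFDerivAt]
  refine h.congr_fderiv ?_
  ext v
  simp

lemma exp_aux (a r : ℝ) :
    HasDerivAt (fun r : ℝ => Real.exp (-r / a)) (Real.exp (-r / a) * (-1 / a)) r :=
  (((hasDerivAt_id r).neg).div_const a).exp

def gK (a r : ℝ) : ℝ := -(r ^ 3)⁻¹ + (r ^ 3)⁻¹ * (r / a + 1) * Real.exp (-r / a)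

lemma K_fderiv (a : ℝ) (ha : 0 < a) (x : E3) (hx : x ≠ 0) :
    HasFDerivAt (K a) (gK a ‖x‖ • innerSL ℝ x) x := by
  have hn : ‖x‖ ≠ 0 := norm_ne_zero_iff.mpr hx
  refine radial_aux (fun r => (1 - Real.exp (-r / a)) / r) _ x hx ?_
  refine ((((exp_aux a ‖x‖).const_sub 1).div (hasDerivAt_id _) hn)).congr_deriv ?_
  simp only [gK, id]
  field_simp
  ring

lemma gK_deriv (a r : ℝ) (ha : 0 < a) (hr : r ≠ 0) :
    HasDerivAt (gK a) (((-Real.exp (-r / a) / (a ^ 2 * r ^ 2) - 3 * gK a r / r) / r) * r) r := by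
  have h1 : HasDerivAt (fun r : ℝ => (r ^ 3)⁻¹) _ r := (hasDerivAt_pow 3 r).inv (by positivity)
  have h2 : HasDerivAt (fun r : ℝ => r / a + 1) (1 / a) r :=
    ((hasDerivAt_id r).div_const a).add_const 1
  refine (h1.neg.add ((h1.mul h2).mul (exp_aux a r))).congr_deriv ?_
  simp only [gK, Pi.mul_apply]
  field_simp
  ring

lemma lap_K (a : ℝ) (ha : 0 < a) (x : E3) (hx : x ≠ 0) :
    lap (K a) x = -Real.exp (-‖x‖ / a) / (a ^ 2 * ‖x‖) := by
  have hn : ‖x‖ ≠ 0 := norm_ne_zero_iff.mpr hx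
  have key : ∀ i : Fin 3, fderiv ℝ (fun y => fderiv ℝ (K a) y (EuclideanSpace.single i 1)) x
      (EuclideanSpace.single i 1) =
      (-Real.exp (-‖x‖ / a) / (a ^ 2 * ‖x‖ ^ 2) - 3 * gK a ‖x‖ / ‖x‖) / ‖x‖ * x i ^ 2
        + gK a ‖x‖ := by
    intro i
    have he : (fun y => fderiv ℝ (K a) y (EuclideanSpace.single i 1)) =ᶠ[nhds x]
        fun y => gK a ‖y‖ * (EuclideanSpace.proj i : E3 →L[ℝ] ℝ) y := by
      filter_upwards [isOpen_ne.mem_nhds hx] with y hy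
      rw [(K_fderiv a ha y hy).fderiv]
      simp [EuclideanSpace.inner_single_right]
    rw [he.fderiv_eq]
    have h1 := radial_aux (gK a) _ x hx (gK_deriv a ‖x‖ ha hn)
    have h2 := h1.mul (EuclideanSpace.proj i : E3 →L[ℝ] ℝ).hasFDerivAt
    have h3 := h2.fderiv
    erw [h3]
    simp [EuclideanSpace.inner_single_right]
    ring
  have hs : ‖x‖ ^ 2 = x 0 ^ 2 + x 1 ^ 2 + x 2 ^ 2 := by
    rw [EuclideanSpace.real_norm_sq_eq, Fin.sum_univ_three]
  unfold lap
  simp only [key]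
  rw [Fin.sum_univ_three]
  have : ∀ A B : ℝ, A * x 0 ^ 2 + B + (A * x 1 ^ 2 + B) + (A * x 2 ^ 2 + B)
      = A * ‖x‖ ^ 2 + 3 * B := by
    intro A B; rw [hs]; ring
  rw [this]
  field_simp
  ring

lemma lap_fderiv (a : ℝ) (ha : 0 < a) (x : E3) (hx : x ≠ 0) :
    HasFDerivAt (lap (K a)) (((a ^ 2 * ‖x‖ ^ 3)⁻¹ * (‖x‖ / a + 1) * Real.exp (-‖x‖ / a))
      • innerSL ℝ x) x := by
  have hn : ‖x‖ ≠ 0 := norm_ne_zero_iff.mpr hx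
  have he : lap (K a) =ᶠ[nhds x] fun y => -Real.exp (-‖y‖ / a) / (a ^ 2 * ‖y‖) := by
    filter_upwards [isOpen_ne.mem_nhds hx] with y hy
    exact lap_K a ha y hy
  refine HasFDerivAt.congr_of_eventuallyEq ?_ he
  refine radial_aux (fun r => -Real.exp (-r / a) / (a ^ 2 * r)) _ x hx ?_
  refine ((exp_aux a ‖x‖).neg.div ((hasDerivAt_id ‖x‖).const_mul (a ^ 2))
    (by simp [hn, ha.ne'])).congr_deriv ?_
  simp only [id, Pi.neg_apply]
  field_simp
  ring

/-- `K_a` is smooth away from the origin; its gradient is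
`∇K_a(x) = -x/|x|³ + (x/|x|³)(|x|/a + 1)e^{-|x|/a}`, the gradient of its Laplacian is
`∇(ΔK_a)(x) = (x/(a²|x|³))(|x|/a + 1)e^{-|x|/a}`, and hence
`∇K_a(x) - a²∇(ΔK_a)(x) = -x/|x|³` for `x ≠ 0`. -/
theorem K_gradient_formulas (a : ℝ) (ha : 0 < a) :
    ContDiffOn ℝ (⊤ : ℕ∞) (K a) {(0 : E3)}ᶜ ∧
    (∀ x : E3, x ≠ 0 → gradient (K a) x =
      (-(‖x‖ ^ 3)⁻¹ + (‖x‖ ^ 3)⁻¹ * (‖x‖ / a + 1) * Real.exp (-‖x‖ / a)) • x) ∧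
    (∀ x : E3, x ≠ 0 → gradient (lap (K a)) x =
      ((a ^ 2 * ‖x‖ ^ 3)⁻¹ * (‖x‖ / a + 1) * Real.exp (-‖x‖ / a)) • x) ∧
    (∀ x : E3, x ≠ 0 →
      gradient (K a) x - a ^ 2 • gradient (lap (K a)) x = (-(‖x‖ ^ 3)⁻¹) • x) := by
  have h2 := fun (x : E3) (hx : x ≠ 0) => grad_aux _ _ x (K_fderiv a ha x hx)
  have h3 := fun (x : E3) (hx : x ≠ 0) => grad_aux _ _ x (lap_fderiv a ha x hx)
  refine ⟨?_, h2, h3, ?_⟩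
  · intro x hx
    have hx' : x ≠ 0 := hx
    have hn : ContDiffAt ℝ (⊤ : ℕ∞) (fun y : E3 => ‖y‖) x := contDiffAt_norm ℝ hx'
    exact ((contDiffAt_const.sub (hn.neg.div_const a).exp).div hn
      (norm_ne_zero_iff.mpr hx')).contDiffWithinAt
  · intro x hx
    have hn : ‖x‖ ≠ 0 := norm_ne_zero_iff.mpr hx
    rw [h2 x hx, h3 x hx, smul_smul, ← sub_smul]
    congr 1
    simp only [gK]
    field_simp
    ring
end
end

section
/- Let a > 0. For every x ∈ ℝ³ with x ≠ 0 the Laplacian of K_a satisfies ΔK_a(x) = −e^{−|x|/a}/(a²|x|), and K_a solves the homogeneous equation −ΔK_a(x) + a² Δ(ΔK_a)(x) = 0 on ℝ³ ∖ {0}. -/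
open MeasureTheory Real

noncomputable section

theorem norm_hasFDerivAt_aux (x : E3) (hx : x ≠ 0) :
    HasFDerivAt (fun y : E3 => ‖y‖) (‖x‖⁻¹ • innerSL ℝ x) x := by
  have hr : ‖x‖ ≠ 0 := norm_ne_zero_iff.mpr hx
  have h1 := (hasStrictFDerivAt_norm_sq x).hasFDerivAt.sqrt (by positivity)
  have h2 : (fun y : E3 => √(‖y‖ ^ 2)) = fun y => ‖y‖ := by
    funext y; exact Real.sqrt_sq (norm_nonneg y)
  rw [h2] at h1
  refine h1.congr_fderiv ?_
  ext v
  simp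
  field_simp

theorem radial_fderiv_aux (g : ℝ → ℝ) (g' : ℝ) (x : E3) (hx : x ≠ 0)
    (hg : HasDerivAt g g' ‖x‖) :
    HasFDerivAt (fun y : E3 => g ‖y‖) (g' • (‖x‖⁻¹ • innerSL ℝ x)) x :=
  hg.comp_hasFDerivAt x (norm_hasFDerivAt_aux x hx)

theorem lap_radial_aux (f : E3 → ℝ) (g h h' : ℝ → ℝ) (hf : ∀ y : E3, y ≠ 0 → f y = g ‖y‖)
    (hg : ∀ r, 0 < r → HasDerivAt g (r * h r) r)
    (hh : ∀ r, 0 < r → HasDerivAt h (h' r) r) (x : E3) (hx : x ≠ 0) :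
    lap f x = ‖x‖ * h' ‖x‖ + 3 * h ‖x‖ := by
  have hr : 0 < ‖x‖ := norm_pos_iff.mpr hx
  have nh : ∀ y : E3, y ≠ 0 → ∀ᶠ z in nhds y, z ≠ 0 := fun y hy => isOpen_ne.mem_nhds hy
  have h1 : ∀ (i : Fin 3) (y : E3), y ≠ 0 →
      fderiv ℝ f y (EuclideanSpace.single i 1) = h ‖y‖ * y i := by
    intro i y hy
    have hry : 0 < ‖y‖ := norm_pos_iff.mpr hy
    have e : f =ᶠ[nhds y] fun z => g ‖z‖ := (nh y hy).mono hf
    rw [e.fderiv_eq, (radial_fderiv_aux g _ y hy (hg _ hry)).fderiv]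
    simp [EuclideanSpace.inner_single_right]
    field_simp
  have h2 : ∀ i : Fin 3, fderiv ℝ (fun y => fderiv ℝ f y (EuclideanSpace.single i 1)) x
      (EuclideanSpace.single i 1) = h' ‖x‖ * (x i) ^ 2 / ‖x‖ + h ‖x‖ := by
    intro i
    have e : (fun y => fderiv ℝ f y (EuclideanSpace.single i 1)) =ᶠ[nhds x]
        fun z => h ‖z‖ * z i := (nh x hx).mono (h1 i)
    have hp : HasFDerivAt (fun z : E3 => z i) (EuclideanSpace.proj i : E3 →L[ℝ] ℝ) x :=
      (EuclideanSpace.proj i : E3 →L[ℝ] ℝ).hasFDerivAt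
    have hm := (radial_fderiv_aux h _ x hx (hh _ hr)).mul hp
    have hm' : fderiv ℝ (fun z : E3 => h ‖z‖ * z i) x = _ := hm.fderiv
    rw [e.fderiv_eq, hm']
    simp [EuclideanSpace.inner_single_right]
    field_simp
    try ring
  have h3 : ‖x‖ ^ 2 = x 0 ^ 2 + x 1 ^ 2 + x 2 ^ 2 := by
    rw [EuclideanSpace.real_norm_sq_eq, Fin.sum_univ_three]
  unfold lap
  rw [Fin.sum_univ_three, h2, h2, h2]
  field_simp
  linear_combination (-h' ‖x‖) * h3

theorem lap_AB_aux (a A B : ℝ) (ha : 0 < a) (f : E3 → ℝ)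
    (hf : ∀ y : E3, y ≠ 0 → f y = (A + B * Real.exp (-‖y‖ / a)) / ‖y‖) (x : E3) (hx : x ≠ 0) :
    lap f x = B * Real.exp (-‖x‖ / a) / (a ^ 2 * ‖x‖) := by
  have he : ∀ r : ℝ, HasDerivAt (fun r => Real.exp (-r / a)) (Real.exp (-r / a) * (-1 / a)) r :=
    fun r => ((hasDerivAt_id r).neg.div_const a).exp
  have hr : 0 < ‖x‖ := norm_pos_iff.mpr hx
  rw [lap_radial_aux f (fun r => (A + B * Real.exp (-r / a)) / r)
    (fun r => -(B * Real.exp (-r / a)) / (a * r ^ 2) - (A + B * Real.exp (-r / a)) / r ^ 3)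
    (fun r => B * Real.exp (-r / a) / (a ^ 2 * r ^ 2) + 3 * B * Real.exp (-r / a) / (a * r ^ 3)
      + 3 * (A + B * Real.exp (-r / a)) / r ^ 4) hf ?_ ?_ x hx]
  · field_simp
    ring
  · intro r hr
    have := (((he r).const_mul B).const_add A).div (hasDerivAt_id r) hr.ne'
    refine this.congr_deriv ?_
    simp only [id]
    field_simp
    try ring
  · intro r hr
    have d1 := ((he r).const_mul B).neg.div ((hasDerivAt_pow 2 r).const_mul a) (by positivity)
    have d2 := (((he r).const_mul B).const_add A).div (hasDerivAt_pow 3 r) (by positivity)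
    refine (d1.sub d2).congr_deriv ?_
    simp
    field_simp
    ring

/-- For `x ≠ 0`, `ΔK_a(x) = -e^{-|x|/a}/(a²|x|)` and `K_a` solves the homogeneous
equation `-ΔK_a + a²Δ²K_a = 0` away from the origin. -/
theorem K_laplacian_and_homogeneous_equation (a : ℝ) (ha : 0 < a) :
    (∀ x : E3, x ≠ 0 → lap (K a) x = -Real.exp (-‖x‖ / a) / (a ^ 2 * ‖x‖)) ∧
    (∀ x : E3, x ≠ 0 → -(lap (K a) x) + a ^ 2 * lap (lap (K a)) x = 0) := by
  have h1 : ∀ x : E3, x ≠ 0 → lap (K a) x = -Real.exp (-‖x‖ / a) / (a ^ 2 * ‖x‖) := by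
    intro x hx
    rw [lap_AB_aux a 1 (-1) ha (K a) (fun y _ => by unfold K; ring) x hx]
    ring
  refine ⟨h1, fun x hx => ?_⟩
  have hr : 0 < ‖x‖ := norm_pos_iff.mpr hx
  rw [lap_AB_aux a 0 (-1 / a ^ 2) ha (lap (K a)) (fun y hy => by
    have hy' : 0 < ‖y‖ := norm_pos_iff.mpr hy
    rw [h1 y hy]; field_simp; try ring) x hx, h1 x hx]
  field_simp
  ring
end
end

section
/- Let a > 0 and set L_a(z) = e^{−|z|/a}/(a²|z|) for z ∈ ℝ³ ∖ {0} (so that L_a = −ΔK_a on ℝ³ ∖ {0}). Then for every x ∈ ℝ³ the convolution satisfies ∫_{ℝ³} L_a(x − y) L_a(y) dy = (2π/a³) e^{−|x|/a}. -/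
open MeasureTheory Real

noncomputable section

/-- The function `L_a(z) = e^{-|z|/a}/(a²|z|)`, which equals `-ΔK_a` away from the origin. -/
def L (a : ℝ) (z : E3) : ℝ := Real.exp (-‖z‖ / a) / (a ^ 2 * ‖z‖)

lemma aux_sum (p q : ℝ) (hp : 0 < p) (hq : 0 < q) :
    ∫⁻ u in Set.Ioi (0:ℝ), ENNReal.ofReal ((p/(2*√u) + q/(2*u*√u)) * exp (-(p*√u - q/√u)^2)) = ENNReal.ofReal (√π) := by
  have hd : ∀ u ∈ Set.Ioi (0:ℝ), HasDerivAt (fun u : ℝ => p*√u - q/√u) (p/(2*√u) + q/(2*u*√u)) u := by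
    intro u hu
    have hu : 0 < u := hu
    have h1 := Real.hasDerivAt_sqrt hu.ne'
    have hs : 0 < √u := Real.sqrt_pos.2 hu
    have h2 := (h1.const_mul p).sub ((hasDerivAt_const u q).div h1 hs.ne')
    refine HasDerivAt.congr_deriv h2 ?_
    rw [Real.sq_sqrt hu.le]
    field_simp
    ring
  have hmono : StrictMonoOn (fun u : ℝ => p*√u - q/√u) (Set.Ioi 0) := by
    intro u hu v hv huv
    have hu : 0 < u := hu
    have hs : 0 < √u := Real.sqrt_pos.2 hu
    have hsv : √u < √v := Real.sqrt_lt_sqrt hu.le huv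
    have : q / √v < q / √u := by gcongr
    have : p * √u < p * √v := by gcongr
    simp only
    linarith
  have himg : (fun u : ℝ => p*√u - q/√u) '' (Set.Ioi 0) = Set.univ := by
    refine Set.eq_univ_of_forall fun w => ?_
    have hD : 0 < w^2 + 4*p*q := by positivity
    have hDs := Real.sq_sqrt hD.le
    have hDp : 0 < √(w^2 + 4*p*q) + w := by
      have : |w| < √(w^2 + 4*p*q) := by
        rw [← Real.sqrt_sq_eq_abs]
        exact Real.sqrt_lt_sqrt (sq_nonneg _) (by nlinarith [mul_pos hp hq])
      have := neg_abs_le w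
      linarith
    set s := √(w^2 + 4*p*q) with hs
    refine ⟨((s + w)/(2*p))^2, ?_, ?_⟩
    · simp only [Set.mem_Ioi]; positivity
    · simp only
      rw [Real.sqrt_sq (by positivity)]
      field_simp
      nlinarith
  have h := lintegral_image_eq_lintegral_abs_deriv_mul measurableSet_Ioi
    (fun x hx => (hd x hx).hasDerivWithinAt) hmono.injOn (fun w => ENNReal.ofReal (exp (-w^2)))
  rw [himg] at h
  simp only [Measure.restrict_univ] at h
  have hg : ∫⁻ w : ℝ, ENNReal.ofReal (exp (-w^2)) = ENNReal.ofReal (√π) := by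
    rw [← ofReal_integral_eq_lintegral_ofReal]
    · have := integral_gaussian 1
      simp at this
      rw [this]
    · simpa using integrable_exp_neg_mul_sq (b := 1) one_pos
    · exact Filter.Eventually.of_forall fun _ => (exp_pos _).le
  rw [← hg, h]
  refine setLIntegral_congr_fun measurableSet_Ioi fun u hu => ?_
  have hu : 0 < u := hu
  have hs : 0 < √u := Real.sqrt_pos.2 hu
  rw [← ENNReal.ofReal_mul (abs_nonneg _), abs_of_pos (by positivity)]

lemma aux_swap (p q : ℝ) (hp : 0 < p) (hq : 0 < q) :
    ∫⁻ u in Set.Ioi (0:ℝ), ENNReal.ofReal (p/√u * exp (-(q^2/u) - p^2*u)) =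
    ∫⁻ u in Set.Ioi (0:ℝ), ENNReal.ofReal (q/(u*√u) * exp (-(q^2/u) - p^2*u)) := by
  have hd : ∀ u ∈ Set.Ioi (0:ℝ), HasDerivAt (fun u : ℝ => q^2/p^2/u) (-(q^2/p^2)/u^2) u := by
    intro u hu
    have hu : 0 < u := hu
    refine HasDerivAt.congr_deriv ((hasDerivAt_const u (q^2/p^2)).div (hasDerivAt_id u) hu.ne') ?_
    simp
  have hinj : Set.InjOn (fun u : ℝ => q^2/p^2/u) (Set.Ioi 0) := by
    intro u hu v hv h
    have hu : 0 < u := hu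
    have hv : 0 < v := hv
    field_simp at h
    exact h.symm
  have himg : (fun u : ℝ => q^2/p^2/u) '' (Set.Ioi 0) = Set.Ioi 0 := by
    ext w
    constructor
    · rintro ⟨u, hu, rfl⟩
      have hu : 0 < u := hu
      simp only [Set.mem_Ioi]; positivity
    · intro hw
      have hw : 0 < w := hw
      refine ⟨q^2/p^2/w, by simp only [Set.mem_Ioi]; positivity, ?_⟩
      simp only
      field_simp
  have h := lintegral_image_eq_lintegral_abs_deriv_mul measurableSet_Ioi
    (fun x hx => (hd x hx).hasDerivWithinAt) hinj
    (fun u => ENNReal.ofReal (p/√u * exp (-(q^2/u) - p^2*u)))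
  rw [himg] at h
  rw [h]
  refine setLIntegral_congr_fun measurableSet_Ioi fun u hu => ?_
  have hu : 0 < u := hu
  have hs : 0 < √u := Real.sqrt_pos.2 hu
  rw [← ENNReal.ofReal_mul (abs_nonneg _), neg_div, abs_neg, abs_of_pos (by positivity)]
  congr 1
  have e1 : √(q^2/p^2/u) = q/p/√u := by
    rw [Real.sqrt_div (by positivity), Real.sqrt_div (by positivity), Real.sqrt_sq hq.le, Real.sqrt_sq hp.le]
  have e2 : -(q^2/(q^2/p^2/u)) - p^2*(q^2/p^2/u) = -(q^2/u) - p^2*u := by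
    field_simp; ring
  rw [e1, e2, ← mul_assoc]
  congr 1
  have : √u ^2 = u := Real.sq_sqrt hu.le
  field_simp
  rw [this]

lemma aux_both (p q : ℝ) (hp : 0 < p) (hq : 0 < q) :
    ∫⁻ u in Set.Ioi (0:ℝ), ENNReal.ofReal (p/√u * exp (-(q^2/u) - p^2*u)) =
      ENNReal.ofReal (√π * exp (-(2*p*q))) := by
  have h := aux_sum p q hp hq
  have h2 : ∫⁻ u in Set.Ioi (0:ℝ), ENNReal.ofReal ((p/(2*√u) + q/(2*u*√u)) * exp (-(p*√u - q/√u)^2))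
    = ∫⁻ u in Set.Ioi (0:ℝ), ENNReal.ofReal (exp (2*p*q)/2) * (ENNReal.ofReal (p/√u * exp (-(q^2/u) - p^2*u)) + ENNReal.ofReal (q/(u*√u) * exp (-(q^2/u) - p^2*u))) := by
    refine setLIntegral_congr_fun measurableSet_Ioi fun u hu => ?_
    have hu : 0 < u := hu
    have hs : 0 < √u := Real.sqrt_pos.2 hu
    rw [← ENNReal.ofReal_add (by positivity) (by positivity), ← ENNReal.ofReal_mul (by positivity)]
    congr 1
    have : -(p*√u - q/√u)^2 = 2*p*q + (-(q^2/u) - p^2*u) := by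
      have : √u ^2 = u := Real.sq_sqrt hu.le
      rw [sub_sq, mul_pow, div_pow, this]
      field_simp
      ring
    rw [this, exp_add]
    field_simp
  rw [h2, lintegral_const_mul _ (by fun_prop), lintegral_add_left (by fun_prop), ← aux_swap p q hp hq] at h
  set A := ∫⁻ u in Set.Ioi (0:ℝ), ENNReal.ofReal (p/√u * exp (-(q^2/u) - p^2*u))
  rw [← two_mul, ← mul_assoc, show (2:ENNReal) = ENNReal.ofReal 2 by simp, ← ENNReal.ofReal_mul (by positivity), div_mul_cancel₀ _ two_ne_zero] at h
  rw [mul_comm (√π), ENNReal.ofReal_mul (by positivity), ← h, ← mul_assoc, ← ENNReal.ofReal_mul (by positivity), ← exp_add]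
  simp

lemma aux_A' (p q : ℝ) (hp : 0 < p) (hq : 0 < q) :
    ∫⁻ u in Set.Ioi (0:ℝ), ENNReal.ofReal (1/(u*√u) * exp (-(q^2/u) - p^2*u)) =
      ENNReal.ofReal (√π / q * exp (-(2*p*q))) := by
  have h := aux_both p q hp hq
  rw [aux_swap p q hp hq] at h
  have : ∀ u : ℝ, ENNReal.ofReal (1/(u*√u) * exp (-(q^2/u) - p^2*u)) = ENNReal.ofReal (1/q) * ENNReal.ofReal (q/(u*√u) * exp (-(q^2/u) - p^2*u)) := by
    intro u
    rw [← ENNReal.ofReal_mul (by positivity)]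
    congr 1
    field_simp
  simp_rw [this]
  rw [lintegral_const_mul _ (by fun_prop), h, ← ENNReal.ofReal_mul (by positivity)]
  congr 1
  field_simp

lemma aux_A (p q : ℝ) (hp : 0 < p) (hq : 0 ≤ q) :
    ∫⁻ u in Set.Ioi (0:ℝ), ENNReal.ofReal (1/√u * exp (-(q^2/u) - p^2*u)) =
      ENNReal.ofReal (√π / p * exp (-(2*p*q))) := by
  rcases hq.eq_or_lt with rfl | hq
  · have key := integral_rpow_mul_exp_neg_mul_Ioi (a := 1/2) (r := p^2) (by norm_num) (by positivity)
    have hint : IntegrableOn (fun x : ℝ ↦ x ^ ((1/2 : ℝ) - 1) * rexp (-(p^2 * x))) (Set.Ioi 0) :=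
      .of_integral_ne_zero (by rw [key]; positivity)
    have h := ofReal_integral_eq_lintegral_ofReal hint (by
      refine (ae_restrict_iff' measurableSet_Ioi).2 (Filter.Eventually.of_forall fun x hx => ?_)
      have hx : 0 < x := hx
      simp only [Pi.zero_apply]; positivity)
    rw [key] at h
    have e : (1/p^2)^(1/2:ℝ) * Gamma (1/2) = √π / p * exp (-(2*p*0)) := by
      rw [Real.Gamma_one_half_eq, ← Real.sqrt_eq_rpow, Real.sqrt_div (by positivity), Real.sqrt_sq hp.le]
      simp; field_simp
    rw [← e, h]
    refine setLIntegral_congr_fun measurableSet_Ioi fun u hu => ?_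
    have hu : 0 < u := hu
    congr 1
    rw [show (1/2:ℝ) - 1 = -(1/2) by norm_num, Real.rpow_neg hu.le, ← Real.sqrt_eq_rpow]
    simp
  have h := aux_both p q hp hq
  have : ∀ u : ℝ, ENNReal.ofReal (1/√u * exp (-(q^2/u) - p^2*u)) = ENNReal.ofReal (1/p) * ENNReal.ofReal (p/√u * exp (-(q^2/u) - p^2*u)) := by
    intro u
    rw [← ENNReal.ofReal_mul (by positivity)]
    congr 1
    field_simp
  simp_rw [this]
  rw [lintegral_const_mul _ (by fun_prop), h, ← ENNReal.ofReal_mul (by positivity)]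
  congr 1
  field_simp

lemma aux_gauss (u v : ℝ) (hu : 0 < u) (hv : 0 < v) (x : EuclideanSpace ℝ (Fin 3)) :
    ∫⁻ y : EuclideanSpace ℝ (Fin 3), ENNReal.ofReal (exp (-(‖x - y‖^2/u) - ‖y‖^2/v)) =
      ENNReal.ofReal ((π*u*v/(u+v)) * √(π*u*v/(u+v)) * exp (-(‖x‖^2/(u+v)))) := by
  have hb : 0 < ((1/u + 1/v : ℝ) : ℂ).re := by rw [Complex.ofReal_re]; positivity
  have hI := (GaussianFourier.integrable_cexp_neg_mul_sq_norm_add hb ((2/u : ℝ) : ℂ) x)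
  have hV := (GaussianFourier.integral_cexp_neg_mul_sq_norm_add hb ((2/u : ℝ) : ℂ) x)
  have e1 : ∀ y : EuclideanSpace ℝ (Fin 3), Complex.exp (-((1/u+1/v : ℝ):ℂ) * ‖y‖^2 + ((2/u:ℝ):ℂ) * (inner ℝ x y : ℝ)) = ((exp (-(1/u+1/v)*‖y‖^2 + 2/u * inner ℝ x y) : ℝ) : ℂ) := by
    intro y; push_cast; rfl
  simp_rw [e1] at hI hV
  rw [integral_complex_ofReal] at hV
  have hI := hI.re
  simp only [RCLike.ofReal_re, Complex.coe_algebraMap, RCLike.re_to_complex, Complex.ofReal_re] at hI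
  have hB : π / (1/u+1/v) = π*u*v/(u+v) := by field_simp; ring
  have e2 : ((π:ℂ) / ((1/u+1/v : ℝ):ℂ)) ^ (Module.finrank ℝ (EuclideanSpace ℝ (Fin 3)) / 2 : ℂ) * Complex.exp (((2/u:ℝ):ℂ)^2 * ‖x‖^2 / (4 * ((1/u+1/v:ℝ):ℂ))) = (((π*u*v/(u+v)) * √(π*u*v/(u+v)) * exp ((2/u)^2*‖x‖^2/(4*(1/u+1/v))) : ℝ) : ℂ) := by
    rw [← Complex.ofReal_div, hB, finrank_euclideanSpace_fin]
    have hpos : 0 < π*u*v/(u+v) := by positivity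
    rw [show (((3:ℕ):ℂ)/2) = ((1 + 1/2 : ℝ) : ℂ) by push_cast; norm_num, ← Complex.ofReal_cpow hpos.le, Real.rpow_add hpos, Real.rpow_one, ← Real.sqrt_eq_rpow]
    push_cast; rfl
  rw [e2] at hV
  have hV := Complex.ofReal_injective hV
  have e3 : ∀ y : EuclideanSpace ℝ (Fin 3), ENNReal.ofReal (exp (-(‖x - y‖^2/u) - ‖y‖^2/v)) = ENNReal.ofReal (exp (-(‖x‖^2/u))) * ENNReal.ofReal (exp (-(1/u+1/v)*‖y‖^2 + 2/u * inner ℝ x y)) := by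
    intro y
    rw [← ENNReal.ofReal_mul (exp_pos _).le, ← exp_add, norm_sub_sq_real]
    congr 2
    ring
  simp_rw [e3]
  rw [lintegral_const_mul _ (by fun_prop), ← ofReal_integral_eq_lintegral_ofReal hI (Filter.Eventually.of_forall fun _ => (exp_pos _).le), hV, ← ENNReal.ofReal_mul (exp_pos _).le, mul_left_comm, ← exp_add]
  congr 3
  field_simp
  ring

lemma aux_add (f : ℝ → ENNReal) (hf : Measurable f) :
    ∫⁻ u in Set.Ioi (0:ℝ), ∫⁻ v in Set.Ioi (0:ℝ), f (u + v) = ∫⁻ w in Set.Ioi (0:ℝ), ENNReal.ofReal w * f w := by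
  have h1 : ∀ u : ℝ, ∫⁻ v in Set.Ioi (0:ℝ), f (u + v) = ∫⁻ w, (Set.Ioi u).indicator f w := by
    intro u
    rw [← lintegral_indicator measurableSet_Ioi, ← lintegral_add_left_eq_self ((Set.Ioi u).indicator f) u]
    congr 1 with v
    by_cases h : 0 < v <;> simp [Set.indicator, h]
  simp_rw [h1]
  rw [lintegral_lintegral_swap]
  · rw [← lintegral_indicator measurableSet_Ioi]
    congr 1 with w
    have : ∀ u, (Set.Ioi u).indicator f w = (Set.Iio w).indicator (fun _ => f w) u := by
      intro u; simp [Set.indicator]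
    simp_rw [this]
    rw [lintegral_indicator measurableSet_Iio, Measure.restrict_restrict measurableSet_Iio, lintegral_const, Measure.restrict_apply_univ, Set.Iio_inter_Ioi, Real.volume_Ioo]
    by_cases h : 0 < w
    · simp [h, mul_comm]
    · simp [h, ENNReal.ofReal_of_nonpos (not_lt.1 h)]
  · have : Function.uncurry (fun u w => (Set.Ioi u).indicator f w) = ({z : ℝ × ℝ | z.1 < z.2}).indicator (fun z => f z.2) := by
      ext z; simp [Set.indicator, Function.uncurry]
    rw [this]
    exact ((hf.comp measurable_snd).indicator (measurableSet_lt measurable_fst measurable_snd)).aemeasurable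

lemma L_eq (a : ℝ) (ha : 0 < a) (z : E3) (hz : z ≠ 0) :
    ENNReal.ofReal (L a z) = ∫⁻ u in Set.Ioi (0:ℝ), ENNReal.ofReal (1/(a^2*√π) * (1/(u*√u) * exp (-(‖z‖^2/u) - (1/(2*a))^2*u))) := by
  have hz : 0 < ‖z‖ := norm_pos_iff.2 hz
  have hpi : 0 < √π := Real.sqrt_pos.2 pi_pos
  have : 0 ≤ 1/(a^2*√π) := by positivity
  simp_rw [ENNReal.ofReal_mul this]
  rw [lintegral_const_mul _ (by fun_prop), aux_A' (1/(2*a)) ‖z‖ (by positivity) hz, ← ENNReal.ofReal_mul this]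
  congr 1
  unfold L
  rw [show -(2*(1/(2*a))*‖z‖) = -‖z‖/a by field_simp]
  field_simp

/-- The convolution square of `L_a = -ΔK_a`: for every `x ∈ ℝ³`,
`∫ L_a(x - y) L_a(y) dy = (2π/a³) e^{-|x|/a}`. -/
theorem L_convolution_square (a : ℝ) (ha : 0 < a) (x : E3) :
    ∫ y : E3, L a (x - y) * L a y = (2 * π / a ^ 3) * Real.exp (-‖x‖ / a) := by
  have hpi : 0 < √π := Real.sqrt_pos.2 pi_pos
  have hpi2 : √π * √π = π := Real.mul_self_sqrt pi_pos.le
  have hLm : Measurable (L a) := by unfold L; fun_prop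
  have hLn : ∀ z, 0 ≤ L a z := fun z => by unfold L; positivity
  rw [integral_eq_lintegral_of_nonneg_ae
    (Filter.Eventually.of_forall fun y => mul_nonneg (hLn _) (hLn _))
    (by
      have : Measurable fun y => L a (x - y) * L a y :=
        (hLm.comp (measurable_const.sub measurable_id)).mul hLm
      exact this.aestronglyMeasurable)]
  suffices H : ∫⁻ y : E3, ENNReal.ofReal (L a (x - y) * L a y)
      = ENNReal.ofReal ((2 * π / a ^ 3) * Real.exp (-‖x‖ / a)) by
    rw [H, ENNReal.toReal_ofReal (by positivity)]
  set G : E3 → ℝ → ENNReal := fun z u =>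
    ENNReal.ofReal (1/(a^2*√π) * (1/(u*√u) * exp (-(‖z‖^2/u) - (1/(2*a))^2*u))) with hG
  have hGm : Measurable (Function.uncurry G) := by
    simp only [hG, Function.uncurry_def]; fun_prop
  have hGm1 : Measurable (fun z : E3 × ℝ × ℝ => G (x - z.1) z.2.1) :=
    hGm.comp (f := fun z : E3 × ℝ × ℝ => (x - z.1, z.2.1)) (by fun_prop)
  have hGm2 : Measurable (fun z : E3 × ℝ × ℝ => G z.1 z.2.2) :=
    hGm.comp (f := fun z : E3 × ℝ × ℝ => (z.1, z.2.2)) (by fun_prop)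
  have hGz : ∀ z, Measurable (G z) := fun z =>
    hGm.comp (f := fun u : ℝ => (z, u)) (by fun_prop)
  have step1 : ∫⁻ y : E3, ENNReal.ofReal (L a (x - y) * L a y) =
      ∫⁻ y : E3, ∫⁻ z, G (x - y) z.1 * G y z.2
        ∂((volume.restrict (Set.Ioi (0:ℝ))).prod (volume.restrict (Set.Ioi (0:ℝ)))) := by
    refine lintegral_congr_ae ?_
    filter_upwards [Measure.ae_ne volume (0 : E3), Measure.ae_ne volume x] with y hy hyx
    rw [ENNReal.ofReal_mul (hLn _), L_eq a ha _ (sub_ne_zero.2 (Ne.symm hyx)), L_eq a ha _ hy,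
      lintegral_prod_mul (hGz _).aemeasurable (hGz _).aemeasurable]
  rw [step1, lintegral_lintegral_swap (by
    exact (hGm1.mul hGm2).aemeasurable)]
  have hsm : Measurable (fun z : (ℝ × ℝ) => ∫⁻ y : E3, G (x - y) z.1 * G y z.2) :=
    Measurable.lintegral_prod_left' (f := fun z : E3 × ℝ × ℝ => G (x - z.1) z.2.1 * G z.1 z.2.2)
      (hGm1.mul hGm2)
  rw [lintegral_prod _ hsm.aemeasurable]
  have step2 : ∫⁻ u in Set.Ioi (0:ℝ), ∫⁻ v in Set.Ioi (0:ℝ), ∫⁻ y : E3, G (x - y) u * G y v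
      = ∫⁻ u in Set.Ioi (0:ℝ), ∫⁻ v in Set.Ioi (0:ℝ),
        (fun w : ℝ => ENNReal.ofReal (√π/a^4 * (1/(w*√w) * exp (-(‖x‖^2/w) - (1/(2*a))^2*w)))) (u + v) := by
    refine setLIntegral_congr_fun measurableSet_Ioi fun u hu => ?_
    refine setLIntegral_congr_fun measurableSet_Ioi fun v hv => ?_
    have hu : 0 < u := hu
    have hv : 0 < v := hv
    have e : ∀ y : E3, G (x - y) u * G y v =
        ENNReal.ofReal ((1/(a^2*√π))^2 * (1/(u*√u)) * (1/(v*√v)) * exp (-((1/(2*a))^2*(u+v)))) *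
          ENNReal.ofReal (exp (-(‖x - y‖^2/u) - ‖y‖^2/v)) := by
      intro y
      simp only [hG]
      rw [← ENNReal.ofReal_mul (by positivity), ← ENNReal.ofReal_mul (by positivity)]
      congr 1
      rw [show -(‖x - y‖^2/u) - (1/(2*a))^2*u = -(‖x - y‖^2/u) + -((1/(2*a))^2*u) by ring,
        show -(‖y‖^2/v) - (1/(2*a))^2*v = -(‖y‖^2/v) + -((1/(2*a))^2*v) by ring,
        show -(‖x - y‖^2/u) - ‖y‖^2/v = -(‖x - y‖^2/u) + -(‖y‖^2/v) by ring,
        show -((1/(2*a))^2*(u+v)) = -((1/(2*a))^2*u) + -((1/(2*a))^2*v) by ring]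
      simp only [exp_add]
      ring
    simp_rw [e]
    rw [lintegral_const_mul _ (by fun_prop), aux_gauss u v hu hv x,
      ← ENNReal.ofReal_mul (by positivity)]
    congr 1
    rw [show -(‖x‖^2/(u+v)) - (1/(2*a))^2*(u+v) = -(‖x‖^2/(u+v)) + -((1/(2*a))^2*(u+v)) by ring,
      exp_add, Real.sqrt_div (by positivity), Real.sqrt_mul (by positivity),
      Real.sqrt_mul (by positivity)]
    have hsu : 0 < √u := Real.sqrt_pos.2 hu
    have hsv : 0 < √v := Real.sqrt_pos.2 hv
    have hsw : 0 < √(u+v) := Real.sqrt_pos.2 (by positivity)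
    have hpi3 : √π^2 = π := by rw [sq, hpi2]
    generalize exp (-(‖x‖^2/(u+v))) = E1
    generalize exp (-((1/(2*a))^2*(u+v))) = E2
    generalize √(u+v) = sw at *
    rw [← hpi3, Real.sqrt_sq hpi.le]
    field_simp
  rw [step2]
  refine (aux_add (fun w : ℝ => ENNReal.ofReal (√π/a^4 * (1/(w*√w) * exp (-(‖x‖^2/w) - (1/(2*a))^2*w)))) (by fun_prop)).trans ?_
  have step3 : ∫⁻ w in Set.Ioi (0:ℝ), ENNReal.ofReal w *
      ENNReal.ofReal (√π/a^4 * (1/(w*√w) * exp (-(‖x‖^2/w) - (1/(2*a))^2*w)))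
      = ∫⁻ w in Set.Ioi (0:ℝ), ENNReal.ofReal (√π/a^4) *
        ENNReal.ofReal (1/√w * exp (-(‖x‖^2/w) - (1/(2*a))^2*w)) := by
    refine setLIntegral_congr_fun measurableSet_Ioi fun w hw => ?_
    have hw : 0 < w := hw
    have hsw : 0 < √w := Real.sqrt_pos.2 hw
    rw [← ENNReal.ofReal_mul (by positivity), ← ENNReal.ofReal_mul (by positivity)]
    congr 1
    field_simp
  rw [step3, lintegral_const_mul _ (by fun_prop),
    aux_A (1/(2*a)) ‖x‖ (by positivity) (norm_nonneg x), ← ENNReal.ofReal_mul (by positivity)]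
  congr 1
  rw [show -(2*(1/(2*a))*‖x‖) = -‖x‖/a by field_simp]
  field_simp
  rw [sq, hpi2]
end
end

section
/- If in addition p ≥ 6, then u is identically zero; that is, for p ≥ 6 the Schrödinger–Bopp–Podolsky system has no nontrivial solution in this class. -/
open MeasureTheory Real

noncomputable section

def pd (i : Fin 3) (f : E3 → ℝ) : E3 → ℝ := fun x => fderiv ℝ f x (EuclideanSpace.single i 1)

def DivOK (V : Fin 3 → E3 → ℝ) (f : E3 → ℝ) : Prop :=
  (∀ i, ContDiff ℝ 1 (V i)) ∧ (∀ x, ∑ i, pd i (V i) x = f x) ∧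
  ∃ g : E3 → ℝ, Integrable g ∧ ∀ i x, |V i x| ≤ (1 + ‖x‖) * g x

lemma pd_mul (i : Fin 3) {f g : E3 → ℝ} (hf : Differentiable ℝ f) (hg : Differentiable ℝ g)
    (x : E3) : pd i (fun x => f x * g x) x = f x * pd i g x + pd i f x * g x := by
  simp only [pd]
  rw [fderiv_fun_mul (hf x) (hg x)]
  simp; ring

lemma pd_add (i : Fin 3) {f g : E3 → ℝ} (hf : Differentiable ℝ f) (hg : Differentiable ℝ g)
    (x : E3) : pd i (fun x => f x + g x) x = pd i f x + pd i g x := by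
  simp only [pd]
  rw [fderiv_fun_add (hf x) (hg x)]
  simp

lemma pd_coord (i j : Fin 3) (x : E3) : pd i (fun x => x j) x = if i = j then 1 else 0 := by
  have : (fun x : E3 => x j) = (EuclideanSpace.proj j : E3 →L[ℝ] ℝ) := by
    ext x; rfl
  simp only [pd, this, ContinuousLinearMap.fderiv]
  simp [eq_comm]

lemma diff_coord (j : Fin 3) : ContDiff ℝ 4 (fun x : E3 => x j) :=
  (EuclideanSpace.proj j : E3 →L[ℝ] ℝ).contDiff

lemma pd_contDiff (i : Fin 3) {f : E3 → ℝ} {n m : ℕ∞} (hf : ContDiff ℝ n f) (h : m + 1 ≤ n) :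
    ContDiff ℝ m (pd i f) := by
  apply ContDiff.clm_apply (hf.fderiv_right (by exact_mod_cast h)) contDiff_const

lemma pd_comm (i j : Fin 3) {f : E3 → ℝ} (hf : ContDiff ℝ 2 f) (x : E3) :
    pd i (pd j f) x = pd j (pd i f) x := by
  have hs : IsSymmSndFDerivAt ℝ f x := hf.contDiffAt.isSymmSndFDerivAt (by simp)
  have hd : DifferentiableAt ℝ (fderiv ℝ f) x :=
    (hf.fderiv_right (m := 1) (by norm_num)).differentiable (by norm_num) x
  have key : ∀ i j, pd i (pd j f) x =
      fderiv ℝ (fderiv ℝ f) x (EuclideanSpace.single i 1) (EuclideanSpace.single j 1) := by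
    intro i j
    unfold pd
    rw [fderiv_clm_apply hd (by fun_prop)]
    simp
  rw [key, key, hs.eq]

lemma abs_pd_pd_le (i j : Fin 3) {f : E3 → ℝ} (hf : ContDiff ℝ 2 f) (x : E3) :
    |pd i (pd j f) x| ≤ ‖fderiv ℝ (fderiv ℝ f) x‖ := by
  have hd : DifferentiableAt ℝ (fderiv ℝ f) x :=
    (hf.fderiv_right (m := 1) (by norm_num)).differentiable (by norm_num) x
  have key : pd i (pd j f) x =
      fderiv ℝ (fderiv ℝ f) x (EuclideanSpace.single i 1) (EuclideanSpace.single j 1) := by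
    unfold pd
    rw [fderiv_clm_apply hd (by fun_prop)]
    simp
  rw [key]
  have := (fderiv ℝ (fderiv ℝ f) x).le_opNorm₂ (EuclideanSpace.single i 1) (EuclideanSpace.single j 1)
  simpa using this

lemma norm_grad (f : E3 → ℝ) (x : E3) : ‖gradient f x‖ = ‖fderiv ℝ f x‖ := by
  simp [gradient]

lemma pd_eq_grad (i : Fin 3) (f : E3 → ℝ) (x : E3) : pd i f x = gradient f x i := by
  have h : (InnerProductSpace.toDual ℝ E3) (gradient f x) = fderiv ℝ f x := toDual_gradient
  have h2 : fderiv ℝ f x (EuclideanSpace.single i 1)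
      = inner ℝ (gradient f x) (EuclideanSpace.single i 1) := by rw [← h]; rfl
  simp only [pd]
  rw [h2, EuclideanSpace.inner_single_right]
  simp

lemma grad_sq (f : E3 → ℝ) (x : E3) :
    ‖gradient f x‖ ^ 2 = pd 0 f x ^ 2 + pd 1 f x ^ 2 + pd 2 f x ^ 2 := by
  rw [EuclideanSpace.norm_sq_eq]
  simp [Fin.sum_univ_three, pd_eq_grad]

lemma abs_pd_le (i : Fin 3) (f : E3 → ℝ) (x : E3) : |pd i f x| ≤ ‖gradient f x‖ := by
  rw [pd_eq_grad]; exact PiLp.norm_apply_le (gradient f x) i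

lemma abs_coord_le (i : Fin 3) (x : E3) : |x i| ≤ ‖x‖ := PiLp.norm_apply_le x i

lemma DivOK.add {V W : Fin 3 → E3 → ℝ} {f g : E3 → ℝ} (h1 : DivOK V f) (h2 : DivOK W g) :
    DivOK (fun i x => V i x + W i x) (fun x => f x + g x) := by
  obtain ⟨a1, b1, g1, c1, d1⟩ := h1
  obtain ⟨a2, b2, g2, c2, d2⟩ := h2
  refine ⟨fun i => (a1 i).add (a2 i), fun x => ?_, fun x => g1 x + g2 x, c1.add c2, fun i x => ?_⟩
  · beta_reduce
    rw [← b1, ← b2, ← Finset.sum_add_distrib]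
    refine Finset.sum_congr rfl fun i _ => ?_
    exact pd_add i ((a1 i).differentiable (by norm_num)) ((a2 i).differentiable (by norm_num)) x
  · have := abs_add_le (V i x) (W i x)
    linarith [d1 i x, d2 i x]

lemma DivOK.smul {V : Fin 3 → E3 → ℝ} {f : E3 → ℝ} (c : ℝ) (h1 : DivOK V f) :
    DivOK (fun i x => c * V i x) (fun x => c * f x) := by
  obtain ⟨a1, b1, g1, c1, d1⟩ := h1
  refine ⟨fun i => contDiff_const.mul (a1 i), fun x => ?_, fun x => |c| * g1 x,
    c1.const_mul _, fun i x => ?_⟩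
  · beta_reduce
    rw [← b1, Finset.mul_sum]
    refine Finset.sum_congr rfl fun i _ => ?_
    rw [pd_mul i (by fun_prop) ((a1 i).differentiable (by norm_num)) x]
    simp [pd]
  · rw [abs_mul]
    nlinarith [d1 i x, abs_nonneg c]

lemma DivOK.congr {V : Fin 3 → E3 → ℝ} {f g : E3 → ℝ} (h1 : DivOK V f) (h : ∀ x, f x = g x) :
    DivOK V g := by
  have : f = g := funext h
  exact this ▸ h1

open Filter Topology in
theorem DivOK.integral_eq_zero {V : Fin 3 → E3 → ℝ} {f : E3 → ℝ} (h : DivOK V f)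
    (hf : Integrable f) : ∫ x, f x = 0 := by
  obtain ⟨a1, b1, g, hg, d1⟩ := h
  obtain ⟨b, hb, hbc, hb0, hbn, hb1⟩ : ∃ b : E3 → ℝ, ContDiff ℝ 1 b ∧ HasCompactSupport b ∧
      b 0 = 1 ∧ (∀ x, 0 ≤ b x) ∧ ∀ x, b x ≤ 1 := by
    let b : ContDiffBump (0 : E3) := ⟨1, 2, by norm_num, by norm_num⟩
    exact ⟨b, b.contDiff, b.hasCompactSupport, b.one_of_mem_closedBall (by simp [b]),
      fun x => b.nonneg, fun x => b.le_one⟩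
  obtain ⟨M, hM⟩ : ∃ M, ∀ y : E3, ‖(1 + ‖y‖) • fderiv ℝ b y‖ ≤ M := by
    have h1 : Continuous (fun y : E3 => (1 + ‖y‖) • fderiv ℝ b y) :=
      (by fun_prop : Continuous fun y : E3 => 1 + ‖y‖).smul (hb.continuous_fderiv (by norm_num))
    have h2 : HasCompactSupport (fun y : E3 => (1 + ‖y‖) • fderiv ℝ b y) :=
      HasCompactSupport.smul_left (f := fun y : E3 => 1 + ‖y‖) (hbc.fderiv ℝ)
    exact h1.bounded_above_of_compact_support h2
  have hM0 : 0 ≤ M := (norm_nonneg _).trans (hM 0)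
  have hM' : ∀ y : E3, (1 + ‖y‖) * ‖fderiv ℝ b y‖ ≤ M := by
    intro y
    have := hM y
    rwa [norm_smul, Real.norm_of_nonneg (by positivity)] at this
  let c : ℕ → ℝ := fun n => 1 / ((n : ℝ) + 1)
  have hc0 : ∀ n, 0 < c n := fun n => by positivity
  have hc1 : ∀ n, c n ≤ 1 := fun n => by
    simp only [c]; rw [div_le_one (by positivity)]; linarith [(Nat.cast_nonneg n : (0:ℝ) ≤ n)]
  have hcl : Tendsto c atTop (𝓝 0) := tendsto_one_div_add_atTop_nhds_zero_nat
  let χ : ℕ → E3 → ℝ := fun n x => b (c n • x)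
  have hχ : ∀ n, ContDiff ℝ 1 (χ n) := fun n => hb.comp (contDiff_const_smul (c n))
  have hχc : ∀ n, HasCompactSupport (χ n) := fun n => hbc.comp_smul (hc0 n).ne'
  have hχd : ∀ n i x, pd i (χ n) x = c n * pd i b (c n • x) := by
    intro n i x
    have h1 : HasFDerivAt (fun x : E3 => c n • x) (c n • ContinuousLinearMap.id ℝ E3) x :=
      (hasFDerivAt_id x).const_smul (c n)
    have h2 := ((hb.differentiable (by norm_num)) (c n • x)).hasFDerivAt.comp x h1
    simp only [pd]
    rw [show fderiv ℝ (χ n) x = _ from h2.fderiv]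
    simp
  have hpb : ∀ i y, |pd i b y| ≤ ‖fderiv ℝ b y‖ := fun i y => by
    rw [← norm_grad]; exact abs_pd_le i _ y
  have hpM : ∀ i y, |pd i b y| ≤ M := fun i y => by
    have := hM' y
    nlinarith [hpb i y, norm_nonneg y, norm_nonneg (fderiv ℝ b y)]
  have hχb : ∀ n i x, |pd i (χ n) x| * (1 + ‖x‖) ≤ M := by
    intro n i x
    rw [hχd, abs_mul, abs_of_pos (hc0 n)]
    have h1 := hM' (c n • x)
    rw [norm_smul, Real.norm_of_nonneg (hc0 n).le] at h1
    have h2 := hpb i (c n • x)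
    have h3 : c n * (1 + ‖x‖) ≤ 1 + c n * ‖x‖ := by linarith [hc1 n]
    calc c n * |pd i b (c n • x)| * (1 + ‖x‖) = (c n * (1 + ‖x‖)) * |pd i b (c n • x)| := by ring
      _ ≤ (1 + c n * ‖x‖) * ‖fderiv ℝ b (c n • x)‖ := by
        apply mul_le_mul h3 h2 (abs_nonneg _)
        have := hc0 n
        positivity
      _ ≤ M := h1
  have hpc : ∀ (i : Fin 3) (w : E3 → ℝ), ContDiff ℝ 1 w → Continuous (pd i w) := fun i w hw =>
    (hw.continuous_fderiv (by norm_num)).clm_apply continuous_const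
  have hpsupp : ∀ n i, HasCompactSupport (pd i (χ n)) := fun n i =>
    (hχc n).fderiv_apply ℝ _
  have ibp : ∀ n, ∫ x, χ n x * f x = - ∫ x, ∑ i, pd i (χ n) x * V i x := by
    intro n
    have e : ∀ i, ∫ x, χ n x * pd i (V i) x = - ∫ x, pd i (χ n) x * V i x := by
      intro i
      apply integral_mul_fderiv_eq_neg_fderiv_mul_of_integrable
      · exact ((hpc i _ (hχ n)).mul (a1 i).continuous).integrable_of_hasCompactSupport
          (hpsupp n i).mul_right
      · exact ((hχ n).continuous.mul (hpc i _ (a1 i))).integrable_of_hasCompactSupport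
          (hχc n).mul_right
      · exact ((hχ n).continuous.mul (a1 i).continuous).integrable_of_hasCompactSupport
          (hχc n).mul_right
      · exact fun x _ => (hχ n).differentiable (by norm_num) x
      · exact fun x _ => (a1 i).differentiable (by norm_num) x
    simp_rw [← b1, Finset.mul_sum]
    rw [integral_finsetSum, integral_finsetSum, ← Finset.sum_neg_distrib]
    · exact Finset.sum_congr rfl fun i _ => e i
    · intro i _
      exact ((hpc i _ (hχ n)).mul (a1 i).continuous).integrable_of_hasCompactSupport
          (hpsupp n i).mul_right
    · intro i _
      exact ((hχ n).continuous.mul (hpc i _ (a1 i))).integrable_of_hasCompactSupport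
          (hχc n).mul_right
  have l1 : Tendsto (fun n => ∫ x, χ n x * f x) atTop (𝓝 (∫ x, f x)) := by
    apply tendsto_integral_of_dominated_convergence (fun x => ‖f x‖)
    · exact fun n => (hχ n).continuous.aestronglyMeasurable.mul hf.1
    · exact hf.norm
    · intro n
      refine Eventually.of_forall fun x => ?_
      rw [norm_mul, Real.norm_of_nonneg (hbn _)]
      exact mul_le_of_le_one_left (norm_nonneg _) (hb1 _)
    · refine Eventually.of_forall fun x => ?_
      have h1 : Tendsto (fun n => c n • x) atTop (𝓝 0) := by
        simpa using hcl.smul_const x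
      have h2 : Tendsto (fun n => χ n x) atTop (𝓝 1) := by
        have h3 := (hb.continuous.tendsto 0).comp h1
        rwa [hb0] at h3
      simpa using h2.mul_const (f x)
  have l2 : Tendsto (fun n => ∫ x, ∑ i, pd i (χ n) x * V i x) atTop (𝓝 (∫ _ : E3, (0:ℝ))) := by
    apply tendsto_integral_of_dominated_convergence (fun x => 3 * (M * g x))
    · intro n
      refine (continuous_finsetSum _ fun i _ => ?_).aestronglyMeasurable
      exact (hpc i _ (hχ n)).mul (a1 i).continuous
    · exact (hg.const_mul _).const_mul _
    · intro n
      refine Eventually.of_forall fun x => ?_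
      have : ∀ i, |pd i (χ n) x * V i x| ≤ M * g x := by
        intro i
        rw [abs_mul]
        have hg0 : 0 ≤ g x := by
          have := (abs_nonneg _).trans (d1 i x)
          exact nonneg_of_mul_nonneg_right this (by positivity)
        calc |pd i (χ n) x| * |V i x| ≤ |pd i (χ n) x| * ((1 + ‖x‖) * g x) := by
              gcongr; exact d1 i x
          _ = (|pd i (χ n) x| * (1 + ‖x‖)) * g x := by ring
          _ ≤ M * g x := by gcongr; exact hχb n i x
      refine (norm_sum_le _ _).trans ?_
      refine (Finset.sum_le_sum (fun i _ => this i)).trans ?_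
      simp
    · refine Eventually.of_forall fun x => ?_
      rw [show (0:ℝ) = ∑ i : Fin 3, 0 * V i x by simp]
      refine tendsto_finsetSum _ fun i _ => Tendsto.mul_const _ ?_
      apply squeeze_zero_norm (a := fun n => c n * M)
      · intro n
        rw [hχd, norm_mul, Real.norm_of_nonneg (hc0 n).le]
        exact mul_le_mul_of_nonneg_left (hpM i _) (hc0 n).le
      · simpa using hcl.mul_const M
  simp_rw [ibp] at l1
  have := tendsto_nhds_unique l1 l2.neg
  simpa using this

def xg (f : E3 → ℝ) : E3 → ℝ := fun x => x 0 * pd 0 f x + x 1 * pd 1 f x + x 2 * pd 2 f x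

lemma lap_eq (f : E3 → ℝ) (x : E3) :
    lap f x = pd 0 (pd 0 f) x + pd 1 (pd 1 f) x + pd 2 (pd 2 f) x := by
  simp only [lap, Fin.sum_univ_three]; rfl

lemma c1d {f : E3 → ℝ} (hf : ContDiff ℝ 1 f) : Differentiable ℝ f :=
  hf.differentiable (by norm_num)

lemma c21 {f : E3 → ℝ} (hf : ContDiff ℝ 2 f) : ContDiff ℝ 1 f := hf.of_le (by norm_num)

lemma pd21 (i : Fin 3) {f : E3 → ℝ} (hf : ContDiff ℝ 2 f) : ContDiff ℝ 1 (pd i f) :=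
  pd_contDiff (n := 2) (m := 1) i hf (by norm_num)

lemma pd32 (i : Fin 3) {f : E3 → ℝ} (hf : ContDiff ℝ 3 f) : ContDiff ℝ 2 (pd i f) :=
  pd_contDiff (n := 3) (m := 2) i hf (by norm_num)

lemma coord1 (j : Fin 3) : ContDiff ℝ 1 (fun x : E3 => x j) := (diff_coord j).of_le (by norm_num)

lemma xg_c1 {f : E3 → ℝ} (hf : ContDiff ℝ 2 f) : ContDiff ℝ 1 (xg f) :=
  (((coord1 0).mul (pd21 0 hf)).add ((coord1 1).mul (pd21 1 hf))).add ((coord1 2).mul (pd21 2 hf))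

lemma pd_xf (i j : Fin 3) {f : E3 → ℝ} (hf : ContDiff ℝ 1 f) (x : E3) :
    pd i (fun x => x j * f x) x = x j * pd i f x + (if i = j then 1 else 0) * f x := by
  rw [pd_mul i (c1d (coord1 j)) (c1d hf), pd_coord]

lemma pd_xsum (i : Fin 3) {f g h : E3 → ℝ} (hf : ContDiff ℝ 1 f) (hg : ContDiff ℝ 1 g)
    (hh : ContDiff ℝ 1 h) (x : E3) :
    pd i (fun x => x 0 * f x + x 1 * g x + x 2 * h x) x
     = x 0 * pd i f x + x 1 * pd i g x + x 2 * pd i h x +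
      ((if i = 0 then 1 else 0) * f x + (if i = 1 then 1 else 0) * g x
        + (if i = 2 then 1 else 0) * h x) := by
  rw [pd_add i (f := fun x : E3 => x 0 * f x + x 1 * g x) (g := fun x : E3 => x 2 * h x)
    (c1d (((coord1 0).mul hf).add ((coord1 1).mul hg))) (c1d ((coord1 2).mul hh)),
    pd_add i (f := fun x : E3 => x 0 * f x) (g := fun x : E3 => x 1 * g x)
    (c1d ((coord1 0).mul hf)) (c1d ((coord1 1).mul hg)), pd_xf i 0 hf, pd_xf i 1 hg, pd_xf i 2 hh]
  ring

lemma pd_xg (i : Fin 3) {f : E3 → ℝ} (hf : ContDiff ℝ 2 f) (x : E3) :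
    pd i (xg f) x = x 0 * pd i (pd 0 f) x + x 1 * pd i (pd 1 f) x + x 2 * pd i (pd 2 f) x
      + pd i f x := by
  unfold xg
  rw [pd_xsum i (pd21 0 hf) (pd21 1 hf) (pd21 2 hf)]
  fin_cases i <;> simp

lemma abs_xg_le (f : E3 → ℝ) (x : E3) : |xg f x| ≤ 3 * (‖x‖ * ‖gradient f x‖) := by
  have h : ∀ i, |x i * pd i f x| ≤ ‖x‖ * ‖gradient f x‖ := fun i => by
    rw [abs_mul]
    exact mul_le_mul (abs_coord_le i x) (abs_pd_le i f x) (abs_nonneg _) (norm_nonneg _)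
  unfold xg
  linarith [abs_add_three (x 0 * pd 0 f x) (x 1 * pd 1 f x) (x 2 * pd 2 f x), h 0, h 1, h 2]

/-- `f ∇h` -/
lemma P1 {f h : E3 → ℝ} (hf : ContDiff ℝ 1 f) (hh : ContDiff ℝ 2 h)
    (hI : Integrable (fun x => |f x| * ‖gradient h x‖)) :
    DivOK (fun i x => f x * pd i h x) (fun x => f x * lap h x +
      (pd 0 f x * pd 0 h x + pd 1 f x * pd 1 h x + pd 2 f x * pd 2 h x)) := by
  refine ⟨fun i => hf.mul (pd21 i hh), fun x => ?_, _, hI, fun i x => ?_⟩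
  · simp only [pd_mul _ (c1d hf) (c1d (pd21 _ hh)), Fin.sum_univ_three, lap_eq]
    ring
  · rw [abs_mul]
    have h1 := mul_le_mul_of_nonneg_left (abs_pd_le i h x) (abs_nonneg (f x))
    have h2 : 0 ≤ ‖x‖ * (|f x| * ‖gradient h x‖) := by positivity
    linarith

/-- `x f` -/
lemma P3 {f : E3 → ℝ} (hf : ContDiff ℝ 1 f) (hI : Integrable f) :
    DivOK (fun i x => x i * f x) (fun x => 3 * f x + xg f x) := by
  refine ⟨fun i => (coord1 i).mul hf, fun x => ?_, _, hI.abs, fun i x => ?_⟩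
  · simp only [pd_xf _ _ hf, Fin.sum_univ_three, xg]
    simp
    ring
  · rw [abs_mul]
    have h1 := mul_le_mul_of_nonneg_right (abs_coord_le i x) (abs_nonneg (f x))
    have h2 : 0 ≤ |f x| := abs_nonneg _
    linarith

/-- `(x·∇f) ∇h` -/
lemma P4 {f h : E3 → ℝ} (hf : ContDiff ℝ 2 f) (hh : ContDiff ℝ 2 h)
    (hI : Integrable (fun x => ‖gradient f x‖ * ‖gradient h x‖)) :
    DivOK (fun i x => xg f x * pd i h x) (fun x => xg f x * lap h x +
      (pd 0 (xg f) x * pd 0 h x + pd 1 (xg f) x * pd 1 h x + pd 2 (xg f) x * pd 2 h x)) := by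
  refine ⟨fun i => (xg_c1 hf).mul (pd21 i hh), fun x => ?_, _, hI.const_mul 3, fun i x => ?_⟩
  · simp only [pd_mul _ (c1d (xg_c1 hf)) (c1d (pd21 _ hh)), Fin.sum_univ_three, lap_eq]
    ring
  · rw [abs_mul]
    have h1 := mul_le_mul (abs_xg_le f x) (abs_pd_le i h x) (abs_nonneg _) (by positivity)
    have h2 : 0 ≤ ‖gradient f x‖ * ‖gradient h x‖ := by positivity
    linarith

/-- `f ∇(x·∇h)` -/
lemma P5 {f h : E3 → ℝ} (hf : ContDiff ℝ 1 f) (hh : ContDiff ℝ 3 h)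
    (hI : Integrable (fun x => |f x| * ‖gradient h x‖))
    (hI' : Integrable (fun x => |f x| * ‖fderiv ℝ (fderiv ℝ h) x‖)) :
    DivOK (fun i x => f x * pd i (xg h) x) (fun x => f x * (2 * lap h x + xg (lap h) x) +
      (pd 0 f x * pd 0 (xg h) x + pd 1 f x * pd 1 (xg h) x + pd 2 f x * pd 2 (xg h) x)) := by
  have hh2 : ContDiff ℝ 2 h := hh.of_le (by norm_num)
  have hpp : ∀ i j, ContDiff ℝ 1 (pd i (pd j h)) := fun i j => pd21 i (pd32 j hh)
  have e : ∀ i, pd i (xg h) = fun x => (x 0 * pd i (pd 0 h) x + x 1 * pd i (pd 1 h) x +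
      x 2 * pd i (pd 2 h) x) + pd i h x := fun i => funext fun x => pd_xg i hh2 x
  have hs : ∀ i, ContDiff ℝ 1 (fun x : E3 => x 0 * pd i (pd 0 h) x + x 1 * pd i (pd 1 h) x +
      x 2 * pd i (pd 2 h) x) := fun i =>
    (((coord1 0).mul (hpp i 0)).add ((coord1 1).mul (hpp i 1))).add ((coord1 2).mul (hpp i 2))
  have hc : ∀ i, ContDiff ℝ 1 (pd i (xg h)) := fun i => by
    rw [e]; exact (hs i).add (pd21 i hh2)
  have hdd : ∀ i x, pd i (pd i (xg h)) x = x 0 * pd 0 (pd i (pd i h)) x +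
      x 1 * pd 1 (pd i (pd i h)) x + x 2 * pd 2 (pd i (pd i h)) x + 2 * pd i (pd i h) x := by
    intro i x
    have sw : ∀ j, pd i (pd i (pd j h)) x = pd j (pd i (pd i h)) x := fun j => by
      rw [show pd i (pd j h) = pd j (pd i h) from funext fun y => pd_comm i j hh2 y,
        pd_comm i j (pd32 i hh)]
    rw [e i, pd_add i (c1d (hs i)) (c1d (pd21 i hh2)), pd_xsum i (hpp i 0) (hpp i 1) (hpp i 2),
      sw, sw, sw]
    fin_cases i <;> simp <;> ring
  have hlap : ∀ j x, pd j (lap h) x = pd j (pd 0 (pd 0 h)) x + pd j (pd 1 (pd 1 h)) x +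
      pd j (pd 2 (pd 2 h)) x := by
    intro j x
    rw [show lap h = fun x => (pd 0 (pd 0 h) x + pd 1 (pd 1 h) x) + pd 2 (pd 2 h) x from
      funext fun x => lap_eq h x,
      pd_add j (f := fun x => pd 0 (pd 0 h) x + pd 1 (pd 1 h) x) (c1d ((hpp 0 0).add (hpp 1 1))) (c1d (hpp 2 2)),
      pd_add j (c1d (hpp 0 0)) (c1d (hpp 1 1))]
  refine ⟨fun i => hf.mul (hc i), fun x => ?_, _, (hI'.const_mul 3).add hI, fun i x => ?_⟩
  · simp only [pd_mul _ (c1d hf) (c1d (hc _)), Fin.sum_univ_three]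
    rw [hdd, hdd, hdd, lap_eq, xg, hlap, hlap, hlap]
    ring
  · rw [abs_mul, e]
    have h1 : ∀ j, |x j * pd i (pd j h) x| ≤ ‖x‖ * ‖fderiv ℝ (fderiv ℝ h) x‖ := fun j => by
      rw [abs_mul]
      exact mul_le_mul (abs_coord_le j x) (abs_pd_pd_le i j hh2 x) (abs_nonneg _) (norm_nonneg _)
    have h2 : |(x 0 * pd i (pd 0 h) x + x 1 * pd i (pd 1 h) x +
      x 2 * pd i (pd 2 h) x) + pd i h x| ≤ 3 * (‖x‖ * ‖fderiv ℝ (fderiv ℝ h) x‖)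
        + ‖gradient h x‖ := by
      refine (abs_add_le _ _).trans ?_
      linarith [abs_add_three (x 0 * pd i (pd 0 h) x) (x 1 * pd i (pd 1 h) x)
        (x 2 * pd i (pd 2 h) x), h1 0, h1 1, h1 2, abs_pd_le i h x]
    have h3 := mul_le_mul_of_nonneg_left h2 (abs_nonneg (f x))
    have h4 : 0 ≤ |f x| * ‖fderiv ℝ (fderiv ℝ h) x‖ := by positivity
    have h5 : 0 ≤ ‖x‖ * (|f x| * ‖gradient h x‖) := by positivity
    simp only [Pi.add_apply]
    nlinarith

lemma cont_grad {f : E3 → ℝ} (hf : ContDiff ℝ 1 f) : Continuous (fun x => ‖gradient f x‖) := by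
  simp only [norm_grad]
  exact (hf.continuous_fderiv (by norm_num)).norm

/-- product integrable from squares -/
lemma int_prod {f g : E3 → ℝ} (hf : Continuous f) (hg : Continuous g)
    (h1 : Integrable (fun x => f x ^ 2)) (h2 : Integrable (fun x => g x ^ 2)) :
    Integrable (fun x => |f x| * g x) := by
  refine Integrable.mono' (h1.add h2) (hf.abs.mul hg).aestronglyMeasurable
    (Filter.Eventually.of_forall fun x => ?_)
  simp only [Pi.add_apply, norm_mul, Real.norm_eq_abs, abs_abs]
  nlinarith [sq_nonneg (|f x| - |g x|), sq_abs (f x), sq_abs (g x)]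

lemma P2 {f : E3 → ℝ} (hf : ContDiff ℝ 2 f) (hI : Integrable (fun x => ‖gradient f x‖ ^ 2)) :
    ∃ V, DivOK V (fun x => xg f x * lap f x - ‖gradient f x‖ ^ 2 / 2) := by
  have hG : (fun x => ‖gradient f x‖ ^ 2) =
      fun x => (pd 0 f x * pd 0 f x + pd 1 f x * pd 1 f x) + pd 2 f x * pd 2 f x := by
    funext x; rw [grad_sq]; ring
  have c : ∀ i, ContDiff ℝ 1 (pd i f) := fun i => pd21 i hf
  have hc : ContDiff ℝ 1 (fun x => ‖gradient f x‖ ^ 2) := by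
    rw [hG]
    exact (((c 0).mul (c 0)).add ((c 1).mul (c 1))).add ((c 2).mul (c 2))
  have h1 := P4 hf hf (by simpa only [sq] using hI)
  have h2 := P3 hc hI
  refine ⟨_, (h1.add (h2.smul (-1/2))).congr fun x => ?_⟩
  have hp : ∀ i, pd i (fun x => ‖gradient f x‖ ^ 2) x =
      2 * (pd 0 f x * pd i (pd 0 f) x + pd 1 f x * pd i (pd 1 f) x
        + pd 2 f x * pd i (pd 2 f) x) := by
    intro i
    rw [hG, pd_add i (f := fun x => pd 0 f x * pd 0 f x + pd 1 f x * pd 1 f x)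
      (g := fun x => pd 2 f x * pd 2 f x)
      (c1d (((c 0).mul (c 0)).add ((c 1).mul (c 1)))) (c1d ((c 2).mul (c 2))),
      pd_add i (f := fun x => pd 0 f x * pd 0 f x) (g := fun x => pd 1 f x * pd 1 f x)
      (c1d ((c 0).mul (c 0))) (c1d ((c 1).mul (c 1))),
      pd_mul i (c1d (c 0)) (c1d (c 0)), pd_mul i (c1d (c 1)) (c1d (c 1)),
      pd_mul i (c1d (c 2)) (c1d (c 2))]
    ring
  have e : xg (fun x => ‖gradient f x‖ ^ 2) x = x 0 * pd 0 (fun x => ‖gradient f x‖ ^ 2) x +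
    x 1 * pd 1 (fun x => ‖gradient f x‖ ^ 2) x + x 2 * pd 2 (fun x => ‖gradient f x‖ ^ 2) x := rfl
  rw [e, hp, hp, hp, pd_xg 0 hf, pd_xg 1 hf, pd_xg 2 hf, grad_sq, pd_comm 1 0 hf, pd_comm 2 0 hf,
    pd_comm 2 1 hf]
  ring

lemma xg_mul {f g : E3 → ℝ} (hf : ContDiff ℝ 1 f) (hg : ContDiff ℝ 1 g) (x : E3) :
    xg (fun x => f x * g x) x = f x * xg g x + g x * xg f x := by
  simp only [xg, pd_mul _ (c1d hf) (c1d hg)]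
  ring

lemma xg_sq {f : E3 → ℝ} (hf : ContDiff ℝ 1 f) (x : E3) :
    xg (fun x => f x ^ 2) x = 2 * f x * xg f x := by
  simp only [sq]
  rw [xg_mul hf hf]; ring

lemma xg_rpow {f : E3 → ℝ} (hf : ContDiff ℝ 1 f) {p : ℝ} (hp : 1 < p) (x : E3) :
    xg (fun x => |f x| ^ p) x = p * |f x| ^ (p - 2) * f x * xg f x := by
  have h : ∀ i, pd i (fun x => |f x| ^ p) x = p * |f x| ^ (p - 2) * f x * pd i f x := by
    intro i
    have h1 := (hasDerivAt_abs_rpow (f x) hp).comp_hasFDerivAt x (c1d hf x).hasFDerivAt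
    have h2 : fderiv ℝ (fun x => |f x| ^ p) x = _ := h1.fderiv
    simp only [pd]
    rw [h2]
    simp
  simp only [xg, h]
  ring

/-- φ part of the Pohozaev identity -/
lemma Pphi {f : E3 → ℝ} (hf : ContDiff ℝ 4 f)
    (hI5 : Integrable (fun x => ‖gradient f x‖ ^ 2))
    (hI6 : Integrable (fun x => (lap f x) ^ 2))
    (hI9 : Integrable (fun x => ‖gradient f x‖ * ‖gradient (lap f) x‖))
    (hI10 : Integrable (fun x => |lap f x| * ‖fderiv ℝ (fderiv ℝ f) x‖))
    (hψ : ContDiff ℝ 2 (lap f)) :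
    ∃ V, DivOK V (fun x => xg f x * lap (lap f) x - (lap f x) ^ 2 / 2) := by
  have hf2 : ContDiff ℝ 2 f := hf.of_le (by norm_num)
  have hf3 : ContDiff ℝ 3 f := hf.of_le (by norm_num)
  have hI : Integrable (fun x => |lap f x| * ‖gradient f x‖) :=
    int_prod hψ.continuous (cont_grad (c21 hf2)) hI6 hI5
  have h1 := P4 hf2 hψ hI9
  have h2 := P5 (c21 hψ) hf3 hI hI10
  have h3 := P3 ((c21 hψ).pow 2) hI6
  refine ⟨_, ((h1.add (h2.smul (-1))).add (h3.smul (1/2))).congr fun x => ?_⟩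
  rw [xg_sq (c21 hψ)]
  ring

/-- Nonexistence for `p ≥ 6`: a classical solution of the Schrödinger–Bopp–Podolsky system
with the stated integrability properties must be trivial. -/
theorem nonexistence_p_ge_six (a ω q p : ℝ) (ha : 0 < a) (hω : 0 < ω) (hp : 2 < p)
    (hp6 : 6 ≤ p)
    (u φ : E3 → ℝ) (hu : ContDiff ℝ 2 u) (hφ : ContDiff ℝ 4 φ)
    (heq1 : ∀ x, -(lap u x) + ω * u x + q ^ 2 * φ x * u x = |u x| ^ (p - 2) * u x)
    (heq2 : ∀ x, -(lap φ x) + a ^ 2 * lap (lap φ) x = 4 * π * (u x) ^ 2)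
    (hI1 : Integrable (fun x => (u x) ^ 2) (volume : Measure E3))
    (hI2 : Integrable (fun x => ‖gradient u x‖ ^ 2) (volume : Measure E3))
    (hI3 : Integrable (fun x => |u x| ^ p) (volume : Measure E3))
    (hI4 : Integrable (fun x => |φ x| * (u x) ^ 2) (volume : Measure E3))
    (hI5 : Integrable (fun x => ‖gradient φ x‖ ^ 2) (volume : Measure E3))
    (hI6 : Integrable (fun x => (lap φ x) ^ 2) (volume : Measure E3))
    (hI7 : Integrable (fun x => |φ x| * ‖gradient φ x‖) (volume : Measure E3))
    (hI8 : Integrable (fun x => |φ x| * ‖gradient (lap φ) x‖) (volume : Measure E3))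
    (hI9 : Integrable (fun x => ‖gradient φ x‖ * ‖gradient (lap φ) x‖)
      (volume : Measure E3))
    (hI10 : Integrable (fun x => |lap φ x| * ‖fderiv ℝ (fderiv ℝ φ) x‖)
      (volume : Measure E3)) :
    u = 0 := by
  have hu1 : ContDiff ℝ 1 u := c21 hu
  have hφ2 : ContDiff ℝ 2 φ := hφ.of_le (by norm_num)
  have hφ1 : ContDiff ℝ 1 φ := c21 hφ2
  have hψ : ContDiff ℝ 2 (lap φ) := by
    have h3 : ∀ i, ContDiff ℝ 3 (pd i φ) := fun i =>
      pd_contDiff (n := 4) (m := 3) i hφ (by norm_num)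
    have h2 : ∀ i, ContDiff ℝ 2 (pd i (pd i φ)) := fun i => pd32 i (h3 i)
    rw [show lap φ = fun x => (pd 0 (pd 0 φ) x + pd 1 (pd 1 φ) x) + pd 2 (pd 2 φ) x from
      funext fun x => lap_eq φ x]
    exact ((h2 0).add (h2 1)).add (h2 2)
  have hI4' : Integrable (fun x => φ x * (u x) ^ 2) (volume : Measure E3) := by
    refine hI4.mono' (hφ1.continuous.mul (hu1.continuous.pow 2)).aestronglyMeasurable
      (Filter.Eventually.of_forall fun x => ?_)
    simp
  have N1 := P1 hu1 hu (int_prod hu1.continuous (cont_grad hu1) hI1 hI2)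
  have N2 := P1 hφ1 hφ2 hI7
  have N3 := P1 hφ1 hψ hI8
  have N4 := P1 (c21 hψ) hφ2 (int_prod hψ.continuous (cont_grad hφ1) hI6 hI5)
  obtain ⟨_, U1⟩ := P2 hu hI2
  have U2 := P3 (hu1.pow 2) hI1
  have U3 := P3 (hφ1.mul (hu1.pow 2)) hI4'
  have U4 := P3 (f := fun x => |u x| ^ p) (hu1.norm_rpow (by linarith : 1 < p)) hI3
  obtain ⟨_, F1⟩ := P2 hφ2 hI5
  obtain ⟨_, F2⟩ := Pphi hφ hI5 hI6 hI9 hI10 hψ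
  have T := (((((N1.smul (1/2)).add (N2.smul (-(q^2/(4*π))))).add
    (N3.smul (a^2*(q^2/(4*π))))).add (N4.smul (-(a^2*(q^2/(4*π)))))).add
    (((U1.add (U2.smul (-ω/2))).add (U3.smul (-q^2/2))).add (U4.smul (1/p)))).add
    ((F1.smul (-(q^2/(8*π)))).add (F2.smul (a^2*(q^2/(8*π)))))
  have T' := T.congr (g := fun x => -(ω * u x ^ 2) - (1/2 - 3/p) * |u x| ^ p
      - q^2/(16*π) * (3 * ‖gradient φ x‖ ^ 2 + 5 * a^2 * (lap φ x) ^ 2)) (by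
    intro x
    have e3 : xg (fun x => φ x * u x ^ 2) x = φ x * (2 * u x * xg u x) + u x ^ 2 * xg φ x := by
      rw [xg_mul hφ1 (hu1.pow 2), xg_sq hu1]
    have hup : |u x| ^ p = |u x| ^ (p - 2) * u x * u x := by
      rcases eq_or_ne (u x) 0 with h | h
      · simp [h, Real.zero_rpow (by linarith : p ≠ 0)]
      · rw [mul_assoc, ← sq, ← sq_abs (u x), ← Real.rpow_natCast,
          ← Real.rpow_add (abs_pos.mpr h)]
        norm_num
    have hpi : π ≠ 0 := Real.pi_ne_zero
    have hp0 : p ≠ 0 := by linarith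
    rw [e3, xg_sq hu1, xg_rpow hu1 (by linarith), grad_sq u, grad_sq φ]
    have E1 : lap u x = ω * u x + q ^ 2 * φ x * u x - |u x| ^ (p - 2) * u x := by
      linarith [heq1 x]
    have E2 : a ^ 2 * lap (lap φ) x = 4 * π * (u x) ^ 2 + lap φ x := by linarith [heq2 x]
    rw [hup, E1]
    generalize |u x| ^ (p - 2) = r
    field_simp
    linear_combination (q^2 * p * (256 * φ x + 128 * xg φ x)) * E2)
  have hint : Integrable (fun x => -(ω * u x ^ 2) - (1/2 - 3/p) * |u x| ^ p
      - q^2/(16*π) * (3 * ‖gradient φ x‖ ^ 2 + 5 * a^2 * (lap φ x) ^ 2)) :=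
    ((hI1.const_mul ω).neg.sub (hI3.const_mul _)).sub
      (((hI5.const_mul 3).add (hI6.const_mul (5 * a^2))).const_mul _)
  have h0 := T'.integral_eq_zero hint
  have hle : ∫ x, (-(ω * u x ^ 2) - (1/2 - 3/p) * |u x| ^ p
      - q^2/(16*π) * (3 * ‖gradient φ x‖ ^ 2 + 5 * a^2 * (lap φ x) ^ 2)) ≤
      ∫ x, -(ω * u x ^ 2) := by
    refine integral_mono hint (hI1.const_mul ω).neg fun x => ?_
    have h1 : 0 ≤ (1/2 - 3/p) * |u x| ^ p := by
      refine mul_nonneg ?_ (by positivity)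
      rw [sub_nonneg, div_le_div_iff₀ (by linarith) (by norm_num)]
      linarith
    have h2 : 0 ≤ q^2/(16*π) * (3 * ‖gradient φ x‖ ^ 2 + 5 * a^2 * (lap φ x) ^ 2) := by
      positivity
    simp only
    linarith
  rw [h0, integral_neg, integral_const_mul] at hle
  have hnn : 0 ≤ ∫ x, u x ^ 2 := integral_nonneg fun x => sq_nonneg _
  have hz : ∫ x, u x ^ 2 = 0 := by nlinarith
  rw [integral_eq_zero_iff_of_nonneg (fun x => sq_nonneg _) hI1] at hz
  have := (Continuous.ae_eq_iff_eq volume (hu1.continuous.pow 2) continuous_const).mp hz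
  funext x
  have hx := congrFun this x
  exact pow_eq_zero_iff (two_ne_zero) |>.mp hx
end
end
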